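/- Let w′ be a subword of a finite binary word w, where w′ is either of the form a b b μ(w″) or of the form μ(w″) b b a for some letters a, b ∈ Σ₂ with a ≠ b and some finite binary word w″ with |w″| ≥ 2. Then w contains a 7/3-power as a subword. -/

import Mathlib

/-- The Thue–Morse morphism `μ` on a single letter (`false` = 0, `true` = 1):
`μ(0) = 01`, `μ(1) = 10`. -/
def muLetter : Bool → List Bool
  | false => [false, true]
  | true  => [true, false]

/-- The Thue–Morse morphism `μ` on binary words. -/
def mu (w : List Bool) : List Bool := (w.map muLetter).flatten

/-- `z` is a `β`-power (for a rational `β`): `z = xⁿx'` with `x'` a prefix of `x`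
and `n + |x'|/|x| = β`. -/
def IsPower (β : ℚ) (z : List Bool) : Prop :=
  ∃ (n : ℕ) (x x' : List Bool), x ≠ [] ∧ x' <+: x ∧
    z = (List.replicate n x).flatten ++ x' ∧
    (n : ℚ) + (x'.length : ℚ) / (x.length : ℚ) = β

/-- The finite word `w` is `α`-power-free: no subword (contiguous factor) of `w`
is a `β`-power for any rational `β ≥ α`. -/
def PowerFree (α : ℝ) (w : List Bool) : Prop :=
  ∀ z : List Bool, z <:+: w → ∀ β : ℚ, α ≤ (β : ℝ) → ¬ IsPower β z

/-- The finite word `w` contains an `α`-power: some subword of `w` is a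
`β`-power for some rational `β ≥ α`. -/
def ContainsPower (α : ℝ) (w : List Bool) : Prop :=
  ∃ z : List Bool, z <:+: w ∧ ∃ β : ℚ, α ≤ (β : ℝ) ∧ IsPower β z

/-- `z` is a (finite) subword of the infinite word `w : ℕ → Bool`. -/
def InfSubword (z : List Bool) (w : ℕ → Bool) : Prop :=
  ∃ i : ℕ, z = (List.range z.length).map fun k => w (i + k)

/-- The infinite word `w` is `α`-power-free. -/
def PowerFreeInf (α : ℝ) (w : ℕ → Bool) : Prop :=
  ∀ z : List Bool, InfSubword z w → ∀ β : ℚ, α ≤ (β : ℝ) → ¬ IsPower β z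

/-- The infinite word `w` contains an `α`-power. -/
def ContainsPowerInf (α : ℝ) (w : ℕ → Bool) : Prop :=
  ∃ z : List Bool, InfSubword z w ∧ ∃ β : ℚ, α ≤ (β : ℝ) ∧ IsPower β z

/-- The length-`n` prefix of an infinite word. -/
def wordPrefix (w : ℕ → Bool) (n : ℕ) : List Bool := (List.range n).map w

/-- `h : Σ₂* → Σ₂*` is a morphism. -/
def IsMorphism (h : List Bool → List Bool) : Prop :=
  ∀ x y : List Bool, h (x ++ y) = h x ++ h y

/-- A morphism is non-erasing if it erases neither letter. -/
def NonErasing (h : List Bool → List Bool) : Prop :=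
  h [false] ≠ [] ∧ h [true] ≠ []

/-- The infinite word `u` is the image of the infinite word `w` under the morphism `h`
(obtained by concatenating the images of the letters of `w`): every `h(w[0..n))` is a
prefix of `u`, and these prefixes exhaust `u`. -/
def IsMorphImage (h : List Bool → List Bool) (w u : ℕ → Bool) : Prop :=
  (∀ n : ℕ, wordPrefix u (h (wordPrefix w n)).length = h (wordPrefix w n)) ∧
  ∀ m : ℕ, ∃ n : ℕ, m ≤ (h (wordPrefix w n)).length

/-- The complementation morphism `E` : `E(0) = 1`, `E(1) = 0`. -/
def eMorph (w : List Bool) : List Bool := w.map fun b => !b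

/-- The Thue–Morse word `μ^ω(0)` (`tm n` = parity of the binary digit sum of `n`). -/
def tm (n : ℕ) : Bool := (Nat.digits 2 n).sum % 2 == 1

/-- `μ³(0) = 01101001`. -/
def w01101001 : List Bool := [false, true, true, false, true, false, false, true]

/-- `μ³(1) = 10010110`. -/
def w10010110 : List Bool := [true, false, false, true, false, true, true, false]

/-!
A word `c y c y c` with `c` a letter is a power of exponent `2 + 1 / (|y| + 1)`, which is at least
`7/3` as soon as `|y| ≤ 2`. Up to complementing letters, `abb μ(w″)` begins with `011` followed by
two blocks from `{01, 10}`, and such an overlap cannot be avoided: `011·10` contains `111`,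
`011·01·10` is `0110110`, and `011·01·01` contains `10101`. The words `μ(w″) bba` are the reversals
of the words `abb μ(v)`, and reversal preserves exponents.
-/

theorem isPower_overlap (c : Bool) (y : List Bool) :
    IsPower (2 + 1 / (y.length + 1)) (c :: y ++ c :: y ++ [c]) :=
  ⟨2, c :: y, [c], by simp, by simp, by simp, by simp⟩

theorem IsPower.reverse {β : ℚ} {z : List Bool} (hz : IsPower β z) : IsPower β z.reverse := by
  obtain ⟨n, _, x, hne, ⟨y, rfl⟩, rfl, rfl⟩ := hz
  refine ⟨n, x.reverse ++ y.reverse, x.reverse, by simpa using hne,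
    List.prefix_append _ _, ?_, by simp⟩
  have rotate : x.reverse ++ (List.replicate n (y.reverse ++ x.reverse)).flatten =
      (List.replicate n (x.reverse ++ y.reverse)).flatten ++ x.reverse := by
    simpa using List.append_flatten_map_append (List.replicate n y.reverse) x.reverse
  simpa [List.reverse_flatten] using rotate

theorem ContainsPower.of_infix {α : ℝ} {u w : List Bool} (hu : ContainsPower α u)
    (huw : u <:+: w) : ContainsPower α w := by
  obtain ⟨z, hzu, hz⟩ := hu
  exact ⟨z, hzu.trans huw, hz⟩

theorem ContainsPower.reverse {α : ℝ} {w : List Bool} (hw : ContainsPower α w) :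
    ContainsPower α w.reverse := by
  obtain ⟨z, hzw, β, hβ, hz⟩ := hw
  exact ⟨z.reverse, List.reverse_infix.2 hzw, β, hβ, hz.reverse⟩

theorem containsPower_of_overlap_infix {α : ℝ} {w : List Bool} (c : Bool) (y : List Bool)
    (hα : α ≤ 2 + 1 / (y.length + 1)) (hyw : c :: y ++ c :: y ++ [c] <:+: w) :
    ContainsPower α w :=
  ⟨_, hyw, _, by push_cast; exact hα, isPower_overlap c y⟩

theorem mu_cons (c : Bool) (w : List Bool) : mu (c :: w) = c :: (!c) :: mu w := by
  cases c <;> rfl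

theorem reverse_muLetter (c : Bool) : (muLetter c).reverse = muLetter (!c) := by
  cases c <;> rfl

theorem reverse_mu (w : List Bool) : (mu w).reverse = mu (eMorph w.reverse) := by
  simp [mu, eMorph, List.reverse_flatten, Function.comp_def, reverse_muLetter]

theorem containsPower_abb_mu (b : Bool) {w : List Bool} (hw : 2 ≤ w.length) :
    ContainsPower (7 / 3) ([!b, b, b] ++ mu w) := by
  obtain ⟨c, d, v, rfl⟩ : ∃ c d v, w = c :: d :: v := by
    match w, hw with
    | c :: d :: v, _ => exact ⟨c, d, v, rfl⟩
  rcases Bool.eq_or_eq_not c b with rfl | rfl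
  · exact containsPower_of_overlap_infix c [] (by norm_num)
      ⟨[!c], (!c) :: mu (d :: v), by simp [mu_cons]⟩
  rcases Bool.eq_or_eq_not d b with rfl | rfl
  · exact containsPower_of_overlap_infix (!d) [d, d] (by norm_num)
      ⟨[], mu v, by simp [mu_cons]⟩
  · exact containsPower_of_overlap_infix b [!b] (by norm_num)
      ⟨[!b, b], mu v, by simp [mu_cons]⟩

theorem containsPower_mu_bba (b : Bool) {w : List Bool} (hw : 2 ≤ w.length) :
    ContainsPower (7 / 3) (mu w ++ [b, b, !b]) := by
  have hlen : 2 ≤ (eMorph w.reverse).length := by simpa [eMorph] using hw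
  have hrev : ([!b, b, b] ++ mu (eMorph w.reverse)).reverse = mu w ++ [b, b, !b] := by
    simp [← reverse_mu]
  exact hrev ▸ (containsPower_abb_mu b hlen).reverse

/-- If `w` has a subword of the form `a b b μ(w″)` or `μ(w″) b b a` with `a ≠ b`
and `|w″| ≥ 2`, then `w` contains a `7/3`-power. -/
theorem abb_mu_forces_seven_thirds_power (w w' w'' : List Bool) (a b : Bool)
    (hab : a ≠ b) (hlen : 2 ≤ w''.length)
    (hform : w' = [a, b, b] ++ mu w'' ∨ w' = mu w'' ++ [b, b, a])
    (hsub : w' <:+: w) :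
    ContainsPower (7/3 : ℝ) w := by
  obtain rfl : a = !b := Bool.eq_not.2 hab
  rcases hform with rfl | rfl
  · exact (containsPower_abb_mu b hlen).of_infix hsub
  · exact (containsPower_mu_bba b hlen).of_infix hsub
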